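/- Let −1 ≤ B < A ≤ 1 and let f ∈ N_{k,c}^α(λ, μ, (1+Az)/(1+Bz)) with k, λ real, λ ≠ 0, μk/λ > 0 (and S_{k}^c f(z)/z, S_{k+1}^c f(z)/z nonvanishing on E). Then for all z ∈ E with |z| = r < 1: L(r) ≤ |(1/cos α)·{e^{iα}(z/S_{k+1}^c f(z))^μ − i sin α}| ≤ U(r), where for B ≠ 0, L(r) = A/B + (1 − A/B)·₂F₁(1, μk/λ, μk/λ + 1; Br) and U(r) = A/B + (1 − A/B)·₂F₁(1, μk/λ, μk/λ + 1; −Br), and for B = 0, L(r) = 1 − (μk/(μk+λ))A and U(r) = 1 + (μk/(μk+λ))A. -/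

import Mathlib

open Complex Set

noncomputable section

/-- The open unit disk in ℂ. -/
def unitDisk : Set ℂ := Metric.ball 0 1

/-- Pochhammer symbol `(x)_n = x (x+1) ⋯ (x+n-1)`. -/
def poch (x : ℂ) (n : ℕ) : ℂ := ∏ i ∈ Finset.range n, (x + i)

/-- `k` is not a nonpositive integer `0, -1, -2, …`. -/
def NotNonposInt (k : ℂ) : Prop := ∀ n : ℕ, k ≠ -(n : ℂ)

/-- `a` is the coefficient sequence of a function `f(z) = z + ∑_{n≥2} a_n z^n`
in the class `A` of normalized analytic functions on the unit disk. -/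
def InA (a : ℕ → ℂ) : Prop :=
  a 0 = 0 ∧ a 1 = 1 ∧ ∀ z ∈ unitDisk, Summable fun n => a n * z ^ n

/-- The generalized Struve convolution operator `S_k^c` applied to
`f(z) = z + ∑_{n≥2} a_n z^n`, namely
`S_k^c f(z) = z + ∑_{n≥1} (-c/4)^n a_{n+1} z^{n+1} / ((3/2)_n (k)_n)`. -/
def struveOp (k c : ℂ) (a : ℕ → ℂ) (z : ℂ) : ℂ :=
  z + ∑' n : ℕ,
    (-c / 4) ^ (n + 1) / (poch (3 / 2) (n + 1) * poch k (n + 1)) * a (n + 2) * z ^ (n + 2)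

/-- Subordination of analytic functions on the unit disk. -/
def Subord (f g : ℂ → ℂ) : Prop :=
  ∃ w : ℂ → ℂ, AnalyticOnNhd ℂ w unitDisk ∧ w 0 = 0 ∧ (∀ z ∈ unitDisk, ‖w z‖ < 1) ∧
    ∀ z ∈ unitDisk, f z = g (w z)

/-- `(z / F z) ^ μ` (principal branch), with the removable singularity at `z = 0`
filled in with the value `1`. -/
def ratioPow (μ : ℝ) (F : ℂ → ℂ) (z : ℂ) : ℂ :=
  (if z = 0 then 1 else z / F z) ^ (μ : ℂ)

/-- `F z / G z`, with the removable singularity at `z = 0` filled in with value `1`. -/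
def ratioQ (F G : ℂ → ℂ) (z : ℂ) : ℂ := if z = 0 then 1 else F z / G z

/-- The expression
`e^{iα} {(1+λ)(z/S_{k+1}f)^μ − λ (S_k f/S_{k+1} f)(z/S_{k+1} f)^μ}`. -/
def Jfun (α : ℝ) (lam : ℂ) (μ : ℝ) (Sk Sk1 : ℂ → ℂ) (z : ℂ) : ℂ :=
  exp (α * I) * ((1 + lam) * ratioPow μ Sk1 z - lam * ratioQ Sk Sk1 z * ratioPow μ Sk1 z)

/-- Membership `f ∈ N_{k,c}^α(λ, μ, φ)` for `f(z) = z + ∑_{n≥2} a_n z^n`. -/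
def memN (α : ℝ) (lam : ℂ) (μ : ℝ) (k c : ℂ) (φ : ℂ → ℂ) (a : ℕ → ℂ) : Prop :=
  Subord (Jfun α lam μ (struveOp k c a) (struveOp (k + 1) c a))
    (fun z => (Real.cos α : ℂ) * φ z + (Real.sin α : ℂ) * I)

/-- `φ` is convex univalent on the unit disk. -/
def ConvexUnivalent (φ : ℂ → ℂ) : Prop :=
  AnalyticOnNhd ℂ φ unitDisk ∧ InjOn φ unitDisk ∧ Convex ℝ (φ '' unitDisk)

/-- `F z / z` is nonvanishing on the unit disk. -/
def Nonvan (F : ℂ → ℂ) : Prop := ∀ z ∈ unitDisk, z ≠ 0 → F z ≠ 0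

/-- The Gaussian hypergeometric function `₂F₁(a,b,c;z)` (as a series). -/
def hyp2F1 (a b c z : ℂ) : ℂ :=
  ∑' n : ℕ, poch a n * poch b n / (poch c n * (n.factorial : ℂ)) * z ^ n
/-- Lower bound `L(r)`: `A/B + (1-A/B) ₂F₁(1, μk/λ, μk/λ+1; Br)` for `B ≠ 0`,
and `1 - (μk/(μk+λ)) A` for `B = 0`. -/
def lowerBdR (A B μ k lam r : ℝ) : ℝ :=
  if B = 0 then 1 - μ * k / (μ * k + lam) * A
  else A / B + (1 - A / B) *
    (hyp2F1 1 ((μ * k / lam : ℝ) : ℂ) (((μ * k / lam : ℝ) : ℂ) + 1) ((B * r : ℝ) : ℂ)).re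

/-- Upper bound `U(r)`: `A/B + (1-A/B) ₂F₁(1, μk/λ, μk/λ+1; -Br)` for `B ≠ 0`,
and `1 + (μk/(μk+λ)) A` for `B = 0`. -/
def upperBdR (A B μ k lam r : ℝ) : ℝ :=
  if B = 0 then 1 + μ * k / (μ * k + lam) * A
  else A / B + (1 - A / B) *
    (hyp2F1 1 ((μ * k / lam : ℝ) : ℂ) (((μ * k / lam : ℝ) : ℂ) + 1) (-((B * r : ℝ) : ℂ))).re

open Filter Topology

/-- Termwise differentiation of power series on the unit disk. -/
lemma aux_powser (b : ℕ → ℂ) (hb : ∀ z ∈ unitDisk, Summable fun n => b n * z ^ n)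
    (z : ℂ) (hz : z ∈ unitDisk) :
    ∃ D, HasDerivAt (fun z => ∑' n, b n * z ^ n) D z ∧
      HasSum (fun n : ℕ => (n : ℂ) * (b n * z ^ n)) (z * D) := by
  have hz1 : ‖z‖ < 1 := by simpa [unitDisk] using hz
  obtain ⟨ρ, hρ1, hρ2⟩ := exists_between hz1
  obtain ⟨σ, hσ1, hσ2⟩ := exists_between hρ2
  have hρ0 : 0 < ρ := lt_of_le_of_lt (norm_nonneg z) hρ1
  have hσ0 : 0 < σ := hρ0.trans hσ1
  have hs := hb (σ : ℂ) (by simp [unitDisk, abs_of_pos hσ0, hσ2])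
  have hbd : ∃ C, ∀ n, ‖b n * (σ : ℂ) ^ n‖ ≤ C := by
    obtain ⟨C, hC⟩ := hs.tendsto_atTop_zero.norm.bddAbove_range
    exact ⟨C, fun n => hC ⟨n, rfl⟩⟩
  obtain ⟨C, hC⟩ := hbd
  have hu : Summable (fun n : ℕ => (C / ρ) * ((n : ℝ) ^ 1 * (ρ / σ) ^ n)) := by
    apply Summable.mul_left
    apply summable_pow_mul_geometric_of_norm_lt_one
    rw [Real.norm_of_nonneg (by positivity)]
    exact (div_lt_one hσ0).2 hσ1
  have hder : ∀ (n : ℕ) (y : ℂ), y ∈ Metric.ball (0 : ℂ) ρ →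
      HasDerivAt (fun y => b n * y ^ n) (b n * (n * y ^ (n - 1))) y := fun n y _ =>
    (hasDerivAt_pow n y).const_mul _
  have hle : ∀ (n : ℕ) (y : ℂ), y ∈ Metric.ball (0 : ℂ) ρ →
      ‖b n * (n * y ^ (n - 1))‖ ≤ (C / ρ) * ((n : ℝ) ^ 1 * (ρ / σ) ^ n) := by
    intro n y hy
    have hy' : ‖y‖ ≤ ρ := by
      have : ‖y‖ < ρ := by simpa using hy
      exact this.le
    rcases n with _ | n
    · simp
    have h1 : ‖b (n + 1)‖ ≤ C / σ ^ (n + 1) := by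
      rw [le_div_iff₀ (by positivity)]
      have := hC (n + 1)
      simpa [abs_of_pos hσ0] using this
    have hC0 : 0 ≤ C := (norm_nonneg _).trans (hC 0)
    calc ‖b (n + 1) * (((n + 1 : ℕ) : ℂ) * y ^ (n + 1 - 1))‖
        = ‖b (n + 1)‖ * ((n + 1 : ℕ) * ‖y‖ ^ n) := by
          rw [norm_mul, norm_mul, norm_pow, Complex.norm_natCast]; simp
      _ ≤ C / σ ^ (n + 1) * ((n + 1 : ℕ) * ρ ^ n) := by gcongr
      _ = _ := by rw [div_pow, pow_succ ρ n]; field_simp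
  have hz' : z ∈ Metric.ball (0 : ℂ) ρ := by simpa using hρ1
  have key := hasDerivAt_tsum_of_isPreconnected hu Metric.isOpen_ball
    (convex_ball (0 : ℂ) ρ).isPreconnected hder hle hz' (hb z hz) hz'
  refine ⟨_, key, ?_⟩
  have hsum : Summable (fun n : ℕ => b n * (n * z ^ (n - 1))) :=
    Summable.of_norm_bounded hu (fun n => hle n z hz')
  refine (hsum.hasSum.mul_left z).congr_fun ?_
  intro n
  rcases n with _ | n
  · simp
  · simp [pow_succ]; ring

/-- ODE comparison. -/
lemma aux_ode (γ : ℝ) (hγ : 0 < γ) (q q' : ℝ → ℝ)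
    (hd : ∀ t ∈ Icc (0 : ℝ) 1, HasDerivAt q (q' t) t)
    (h : ∀ t ∈ Icc (0 : ℝ) 1, 0 ≤ γ * q t + t * q' t) : 0 ≤ q 1 := by
  have hm : MonotoneOn (fun t => t ^ γ * q t) (Icc (0 : ℝ) 1) := by
    have hd2 : ∀ t ∈ interior (Icc (0 : ℝ) 1),
        HasDerivAt (fun t => t ^ γ * q t) (γ * t ^ (γ - 1) * q t + t ^ γ * q' t) t := by
      intro t ht
      rw [interior_Icc] at ht
      exact (Real.hasDerivAt_rpow_const (Or.inl ht.1.ne')).mul (hd t ⟨ht.1.le, ht.2.le⟩)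
    apply monotoneOn_of_deriv_nonneg (convex_Icc 0 1)
    · intro t ht
      exact ((Real.continuousAt_rpow_const t γ (Or.inr hγ.le)).mul
        (hd t ht).continuousAt).continuousWithinAt
    · intro t ht
      exact (hd2 t ht).differentiableAt.differentiableWithinAt
    · intro t ht
      rw [(hd2 t ht).deriv]
      rw [interior_Icc] at ht
      have h1 := h t ⟨ht.1.le, ht.2.le⟩
      have h2 : t ^ γ = t ^ (γ - 1) * t := by
        rw [← Real.rpow_add_one ht.1.ne']; ring_nf
      rw [h2]
      have h3 := mul_nonneg (Real.rpow_nonneg ht.1.le (γ - 1)) h1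
      linarith
  have := hm (left_mem_Icc.2 zero_le_one) (right_mem_Icc.2 zero_le_one) zero_le_one
  simpa [Real.zero_rpow hγ.ne'] using this

/-- The image of a disk under the Mobius map. -/
lemma aux_mob (A B s : ℝ) (hB : -1 ≤ B) (hBA : B < A) (hA : A ≤ 1) (hs0 : 0 ≤ s) (hs : s < 1)
    (w : ℂ) (hw : ‖w‖ ≤ s) :
    ‖(1 + (A : ℂ) * w) / (1 + (B : ℂ) * w)‖ ≤ (1 + A * s) / (1 + B * s) ∧
    (1 - A * s) / (1 - B * s) ≤ ((1 + (A : ℂ) * w) / (1 + (B : ℂ) * w)).re := by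
  have hBs1 : 0 < 1 + B * s := by nlinarith
  have hBs2 : 0 < 1 - B * s := by nlinarith
  have hBs : 0 < 1 - B ^ 2 * s ^ 2 := by nlinarith [mul_pos hBs1 hBs2]
  have hABs : 0 < 1 - A * B * s ^ 2 := by
    have : A * B ≤ 1 := by nlinarith
    nlinarith
  have hne : 1 + (B : ℂ) * w ≠ 0 := by
    intro h0
    have h1 : (B : ℂ) * w = -1 := by linear_combination h0
    have h2 : |B| * ‖w‖ = 1 := by
      have := congrArg norm h1
      simpa using this
    have h3 : |B| ≤ 1 := abs_le.2 ⟨hB, by linarith⟩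
    nlinarith [abs_nonneg B, norm_nonneg w]
  have hk : ‖w + (B : ℂ) * s ^ 2‖ ≤ s * ‖1 + (B : ℂ) * w‖ := by
    apply le_of_sq_le_sq _ (by positivity)
    rw [mul_pow, Complex.sq_norm, Complex.sq_norm, normSq_apply, normSq_apply]
    have hm : w.re * w.re + w.im * w.im ≤ s ^ 2 := by
      rw [← normSq_apply, ← Complex.sq_norm]; gcongr
    have e1 : ((s : ℂ) ^ 2).re = s ^ 2 := by norm_cast
    have e2 : ((s : ℂ) ^ 2).im = 0 := by norm_cast
    simp [e1, e2]
    nlinarith [mul_nonneg (sub_nonneg.2 hm) hBs.le]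
  have hsc : (1 - (B : ℂ) ^ 2 * s ^ 2) ≠ 0 := by exact_mod_cast hBs.ne'
  set c : ℝ := (1 - A * B * s ^ 2) / (1 - B ^ 2 * s ^ 2) with hc
  set ρ : ℝ := (A - B) * s / (1 - B ^ 2 * s ^ 2) with hρ
  have hc0 : 0 ≤ c := by positivity
  have hdisk : ‖(1 + (A : ℂ) * w) / (1 + (B : ℂ) * w) - c‖ ≤ ρ := by
    have e : (1 + (A : ℂ) * w) / (1 + (B : ℂ) * w) - c
        = ((A - B) / (1 - B ^ 2 * s ^ 2) : ℝ) * ((w + (B : ℂ) * s ^ 2) / (1 + (B : ℂ) * w)) := by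
      rw [hc]; push_cast; rw [div_sub_div _ _ hne hsc, div_mul_div_comm, mul_comm (1 + (B : ℂ) * w)]; congr 1 <;> ring
    have h0 : 0 ≤ (A - B) / (1 - B ^ 2 * s ^ 2) := div_nonneg (by linarith) hBs.le
    rw [e, norm_mul, norm_div, Complex.norm_real, Real.norm_of_nonneg h0, hρ, mul_div_right_comm]
    gcongr
    rw [div_le_iff₀ (norm_pos_iff.2 hne)]
    exact hk
  have e1 : (1 + A * s) / (1 + B * s) = c + ρ := by
    rw [hc, hρ, ← add_div, div_eq_div_iff hBs1.ne' hBs.ne']; ring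
  have e2 : (1 - A * s) / (1 - B * s) = c - ρ := by
    rw [hc, hρ, ← sub_div, div_eq_div_iff hBs2.ne' hBs.ne']; ring
  constructor
  · rw [e1]
    calc _ = ‖(c : ℂ) + ((1 + (A : ℂ) * w) / (1 + (B : ℂ) * w) - c)‖ := by congr 1; ring
      _ ≤ ‖(c : ℂ)‖ + _ := norm_add_le _ _
      _ ≤ c + ρ := by
        rw [Complex.norm_real, Real.norm_of_nonneg hc0]; gcongr
  · rw [e2]
    have := (abs_le.1 ((Complex.abs_re_le_norm _).trans hdisk)).1
    simp only [sub_re, ofReal_re] at this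
    linarith

lemma aux_poch (x : ℂ) (n : ℕ) : poch x n * (x + n) = x * poch (x + 1) n := by
  unfold poch
  rw [← Finset.prod_range_succ (fun i : ℕ => x + (i : ℂ)), Finset.prod_range_succ', mul_comm]
  simp only [Nat.cast_zero, add_zero]
  congr 1
  apply Finset.prod_congr rfl
  intro i _
  push_cast; ring

lemma aux_poch_ne (x : ℂ) (hx : NotNonposInt x) (n : ℕ) : poch x n ≠ 0 := by
  unfold poch
  rw [Finset.prod_ne_zero_iff]
  intro i _ h
  exact hx i (by linear_combination h)

lemma aux_poch_one (n : ℕ) : poch 1 n = n.factorial := by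
  unfold poch
  induction n with
  | zero => simp
  | succ n ih => rw [Finset.prod_range_succ, ih, Nat.factorial_succ]; push_cast; ring

/-- The hypergeometric function and its differential equation. -/
lemma aux_hyp (γ : ℝ) (hγ : 0 < γ) (z : ℂ) (hz : z ∈ unitDisk) :
    ∃ D, HasDerivAt (hyp2F1 1 (γ : ℂ) ((γ : ℂ) + 1)) D z ∧
      (γ : ℂ) * hyp2F1 1 (γ : ℂ) ((γ : ℂ) + 1) z + z * D = γ * (1 / (1 - z)) := by
  have hne : ∀ n : ℕ, (γ : ℂ) + n ≠ 0 := by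
    intro n
    have : γ + n ≠ 0 := by positivity
    exact_mod_cast this
  have hc : ∀ n : ℕ, poch 1 n * poch (γ : ℂ) n / (poch ((γ : ℂ) + 1) n * (n.factorial : ℂ))
      = γ / (γ + n) := by
    intro n
    have h1 : (n.factorial : ℂ) ≠ 0 := by exact_mod_cast n.factorial_ne_zero
    have h2 : poch ((γ : ℂ) + 1) n ≠ 0 := by
      apply aux_poch_ne
      intro m hm
      apply hne (m + 1)
      push_cast
      linear_combination hm
    rw [aux_poch_one, div_eq_div_iff (mul_ne_zero h2 h1) (hne n)]
    linear_combination (n.factorial : ℂ) * aux_poch (γ : ℂ) n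
  have hH : hyp2F1 1 (γ : ℂ) ((γ : ℂ) + 1) = fun z => ∑' n : ℕ, ((γ : ℂ) / (γ + n)) * z ^ n := by
    funext z
    unfold hyp2F1
    simp_rw [hc]
  have hsum : ∀ z ∈ unitDisk, Summable fun n : ℕ => ((γ : ℂ) / (γ + n)) * z ^ n := by
    intro z hz
    have hz1 : ‖z‖ < 1 := by simpa [unitDisk] using hz
    apply Summable.of_norm_bounded (summable_geometric_of_lt_one (norm_nonneg z) hz1)
    intro n
    rw [norm_mul, norm_pow]
    apply mul_le_of_le_one_left (by positivity)
    have : (γ : ℂ) / (γ + n) = ((γ / (γ + n) : ℝ) : ℂ) := by push_cast; rfl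
    rw [this, Complex.norm_real, Real.norm_of_nonneg (by positivity)]
    rw [div_le_one (by positivity)]
    linarith [(Nat.cast_nonneg n : (0 : ℝ) ≤ n)]
  obtain ⟨D, hD, hs⟩ := aux_powser _ hsum z hz
  refine ⟨D, by rw [hH]; exact hD, ?_⟩
  rw [hH]
  have hz1 : ‖z‖ < 1 := by simpa [unitDisk] using hz
  have h1 := ((hsum z hz).hasSum.mul_left (γ : ℂ)).add hs
  have h2 := (hasSum_geometric_of_norm_lt_one hz1).mul_left (γ : ℂ)
  rw [one_div]
  refine h1.unique (h2.congr_fun ?_)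
  intro n
  have := hne n
  field_simp

/-- The coefficient sequence. -/
def coefE (k c : ℂ) (a : ℕ → ℂ) (n : ℕ) : ℂ :=
  (-c / 4) ^ n / (poch (3 / 2) n * poch k n) * a (n + 1)

lemma aux_d_bdd (k c : ℂ) : ∃ C, ∀ n, ‖(-c / 4) ^ n / (poch (3 / 2) n * poch k n)‖ ≤ C := by
  set d : ℕ → ℂ := fun n => (-c / 4) ^ n / (poch (3 / 2) n * poch k n) with hd
  have hstep : ∀ n, d (n + 1) = (-c / 4) / ((3 / 2 + n) * (k + n)) * d n := by
    intro n
    simp only [hd, poch, Finset.prod_range_succ, pow_succ]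
    rw [div_mul_div_comm]
    congr 1 <;> ring
  have hS : Summable d := by
    apply summable_of_ratio_norm_eventually_le (r := 1 / 2) (by norm_num)
    have ht : Tendsto (fun n : ℕ => (-c / 4) / ((3 / 2 + (n : ℂ)) * (k + n))) atTop (𝓝 0) := by
      have e : ∀ x : ℂ, Tendsto (fun n : ℕ => (x + (n : ℂ))⁻¹) atTop (𝓝 0) := by
        intro x
        apply tendsto_inv₀_cobounded.comp
        apply tendsto_const_add_cobounded x |>.comp
        rw [← tendsto_norm_atTop_iff_cobounded]
        simpa using tendsto_natCast_atTop_atTop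
      have := ((e (3 / 2)).mul (e k)).const_mul (-c / 4)
      simp only [mul_zero] at this
      refine this.congr fun n => ?_
      rw [div_eq_mul_inv _ ((3 / 2 + (n : ℂ)) * (k + n)), mul_inv]
    have := ht.norm.eventually_le_const (u := 1 / 2) (by simp)
    filter_upwards [this] with n hn
    rw [hstep, norm_mul]
    gcongr
  obtain ⟨C, hC⟩ := hS.tendsto_atTop_zero.norm.bddAbove_range
  exact ⟨C, fun n => hC ⟨n, rfl⟩⟩

lemma aux_coef_sum (k c : ℂ) (a : ℕ → ℂ) (ha : InA a) :
    ∀ z ∈ unitDisk, Summable fun n => coefE k c a n * z ^ n := by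
  intro z hz
  by_cases h0 : z = 0
  · subst h0
    apply summable_of_ne_finset_zero (s := {0})
    intro n hn
    have : n ≠ 0 := by simpa using hn
    simp [this]
  have h1 : Summable fun n => a (n + 1) * z ^ n := by
    have := ((summable_nat_add_iff 1).2 (ha.2.2 z hz)).mul_right z⁻¹
    refine this.congr fun n => ?_
    rw [pow_succ]; field_simp
  obtain ⟨C, hC⟩ := aux_d_bdd k c
  apply Summable.of_norm_bounded (h1.norm.mul_left C)
  intro n
  rw [coefE, mul_assoc, norm_mul]
  gcongr
  exact hC n

lemma aux_struve (k c : ℂ) (a : ℕ → ℂ) (ha : InA a) (z : ℂ) (hz : z ∈ unitDisk) :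
    struveOp k c a z = z * ∑' n, coefE k c a n * z ^ n := by
  rw [(aux_coef_sum k c a ha z hz).tsum_eq_zero_add]
  have : coefE k c a 0 = 1 := by simp [coefE, poch, ha.2.1]
  rw [this, mul_add, ← tsum_mul_left]
  unfold struveOp
  congr 1
  · simp
  · apply tsum_congr
    intro n
    simp only [coefE]
    ring

/-- The principal branch cannot be crossed. -/
lemma aux_branch (μ : ℝ) (hμ0 : 0 < μ) (hμ1 : μ < 1) (h G : ℂ → ℂ)
    (hh : AnalyticOnNhd ℂ h unitDisk) (hG : AnalyticOnNhd ℂ G unitDisk)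
    (h1 : h 0 = 1) (hne : ∀ z ∈ unitDisk, h z ≠ 0) (hG0 : G 0 ≠ 0)
    (hc : ContinuousOn (fun z => h z ^ (μ : ℂ) * G z) unitDisk) :
    ∀ z ∈ unitDisk, h z ∈ slitPlane := by
  intro z₀ hz₀
  by_contra hns
  have hU : IsOpen unitDisk := Metric.isOpen_ball
  have hpre : IsPreconnected unitDisk := (convex_ball (0 : ℂ) 1).isPreconnected
  have h0U : (0 : ℂ) ∈ unitDisk := by simp [unitDisk]
  have hopen : ∀ z ∈ unitDisk, h z ∉ slitPlane → 𝓝 (h z) ≤ map h (𝓝 z) := by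
    intro z hz hzs
    rcases (hh z hz).eventually_constant_or_nhds_le_map_nhds with hconst | hle
    · exfalso
      have := hh.eqOn_of_preconnected_of_eventuallyEq (analyticOnNhd_const (v := h z)) hpre hz
        hconst h0U
      rw [h1] at this
      apply hzs
      change 1 = h z at this
      rw [← this]
      exact one_mem_slitPlane
    · exact hle
  have hzero : ∀ z ∈ unitDisk, h z ∉ slitPlane → G z = 0 := by
    intro z hz hzs
    have hzs' := hzs
    rw [mem_slitPlane_iff] at hzs'
    push Not at hzs'
    obtain ⟨hre, him⟩ := hzs'
    have hre' : (h z).re < 0 := by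
      refine lt_of_le_of_ne hre fun h0 => hne z hz ?_
      apply Complex.ext <;> simp [h0, him]
    set F := 𝓝 z ⊓ comap h (𝓝[{w | w.im < 0}] (h z)) with hF
    have hbot : (𝓝[{w : ℂ | w.im < 0}] (h z)).NeBot := by
      rw [← mem_closure_iff_nhdsWithin_neBot]
      rw [Complex.closure_setOfPred_im_lt]
      simp [him]
    have hFbot : F.NeBot := by
      rw [hF, ← map_neBot_iff h, Filter.push_pull]
      rw [inf_eq_right.2 (nhdsWithin_le_nhds.trans (hopen z hz hzs))]
      exact hbot
    have hFz : F ≤ 𝓝 z := inf_le_left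
    have hFh : Tendsto h F (𝓝[{w | w.im < 0}] (h z)) :=
      tendsto_comap.mono_left inf_le_right
    have hlog := (tendsto_log_nhdsWithin_im_neg_of_re_neg_of_im_zero hre' him).comp hFh
    have hGt : Tendsto G F (𝓝 (G z)) := (hG z hz).continuousAt.tendsto.mono_left hFz
    have hl1 : Tendsto (fun x => h x ^ (μ : ℂ) * G x) F
        (𝓝 (exp ((Real.log ‖h z‖ - Real.pi * I) * μ) * G z)) := by
      have := ((continuous_exp.tendsto _).comp (hlog.mul_const (μ : ℂ))).mul hGt
      refine this.congr' ?_
      filter_upwards [hFz (hU.mem_nhds hz)] with x hx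
      simp only [Function.comp]
      rw [cpow_def_of_ne_zero (hne x hx)]
    have hl2 : Tendsto (fun x => h x ^ (μ : ℂ) * G x) F (𝓝 (h z ^ (μ : ℂ) * G z)) :=
      ((hc.continuousAt (hU.mem_nhds hz)).tendsto).mono_left hFz
    have heq := tendsto_nhds_unique hl1 hl2
    by_contra hGz
    have heq2 := mul_right_cancel₀ hGz heq
    rw [cpow_def_of_ne_zero (hne z hz)] at heq2
    have hlogz : log (h z) = Real.log ‖h z‖ + Real.pi * I := by
      rw [log, arg_eq_pi_iff.2 ⟨hre', him⟩]
    rw [hlogz, Complex.exp_eq_exp_iff_exists_int] at heq2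
    obtain ⟨n, hn⟩ := heq2
    have h3 : ((-μ : ℝ) : ℂ) * (2 * Real.pi * I) = (n : ℂ) * (2 * Real.pi * I) := by
      push_cast
      linear_combination hn
    have h4 := mul_right_cancel₀ two_pi_I_ne_zero h3
    have h5 : -μ = (n : ℝ) := by exact_mod_cast h4
    have h6 : (n : ℝ) < 0 := by linarith
    have h7 : (-1 : ℝ) < n := by linarith
    have h8 : n < 0 := by exact_mod_cast h6
    have h9 : -1 < n := by exact_mod_cast h7
    omega
  have hfreq : ∃ᶠ z in 𝓝[≠] z₀, G z = 0 := by
    intro hev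
    rw [eventually_nhdsWithin_iff] at hev
    have hS : {w : ℂ | w ≠ h z₀ → w ∈ slitPlane} ∈ 𝓝 (h z₀) := by
      apply hopen z₀ hz₀ hns
      rw [mem_map]
      filter_upwards [hev, hU.mem_nhds hz₀] with z hz hzU hw
      by_contra hcon
      refine hz ?_ (hzero z hzU hcon)
      intro hzz
      apply hw
      rw [hzz]
    obtain ⟨ε, hε, hball⟩ := Metric.mem_nhds_iff.1 hS
    have hmem : h z₀ - (ε / 2 : ℝ) ∈ Metric.ball (h z₀) ε := by
      rw [Metric.mem_ball, dist_eq_norm]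
      have : h z₀ - (ε / 2 : ℝ) - h z₀ = ((-(ε / 2) : ℝ) : ℂ) := by push_cast; ring
      rw [this, Complex.norm_real, Real.norm_eq_abs, abs_neg, abs_of_pos (by linarith)]
      linarith
    have h2 := hball hmem
    have h3 : h z₀ - (ε / 2 : ℝ) ≠ h z₀ := by
      intro h4
      have : ((ε / 2 : ℝ) : ℂ) = 0 := by linear_combination -h4
      have : ε / 2 = 0 := by exact_mod_cast this
      linarith
    have h4 := h2 h3
    rw [mem_slitPlane_iff] at h4 hns
    push Not at hns
    simp only [sub_re, ofReal_re, sub_im, ofReal_im] at h4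
    rcases h4 with h4 | h4
    · linarith [hns.1]
    · apply h4; rw [hns.2]; simp
  exact hG0 (hG.eqOn_zero_of_preconnected_of_frequently_eq_zero hpre hz₀ hfreq h0U)

lemma aux_ne (B : ℝ) (hB : -1 ≤ B) (hB1 : B ≤ 1) (w : ℂ) (hw : ‖w‖ < 1) :
    1 + (B : ℂ) * w ≠ 0 := by
  intro h0
  have h1 : (B : ℂ) * w = -1 := by linear_combination h0
  have h2 : |B| * ‖w‖ = 1 := by
    have := congrArg norm h1
    simpa using this
  have h3 : |B| ≤ 1 := abs_le.2 ⟨hB, hB1⟩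
  nlinarith [abs_nonneg B, norm_nonneg w]

lemma aux_final (γ A B : ℝ) (hγ : 0 < γ) (hB : -1 ≤ B) (hBA : B < A) (hA : A ≤ 1)
    (p p' w : ℂ → ℂ) (hp : ∀ z ∈ unitDisk, HasDerivAt p (p' z) z)
    (hw : ∀ z ∈ unitDisk, ‖w z‖ ≤ ‖z‖)
    (hode : ∀ z ∈ unitDisk,
      γ * p z + z * p' z = γ * ((1 + (A : ℂ) * w z) / (1 + (B : ℂ) * w z)))
    (U U' : ℝ → ℝ) (hU : ∀ x, |x| < 1 → HasDerivAt U (U' x) x)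
    (hUode : ∀ x, |x| < 1 → γ * U x + x * U' x = γ * ((1 + A * x) / (1 + B * x)))
    (z : ℂ) (hz : z ∈ unitDisk) : U (-‖z‖) ≤ ‖p z‖ ∧ ‖p z‖ ≤ U ‖z‖ := by
  have hz1 : ‖z‖ < 1 := by simpa [unitDisk] using hz
  have htn : ∀ t ∈ Icc (0 : ℝ) 1, ‖(t : ℂ) * z‖ = t * ‖z‖ := by
    intro t ht
    rw [norm_mul, Complex.norm_real, Real.norm_of_nonneg ht.1]
  have hlt : ∀ t ∈ Icc (0 : ℝ) 1, t * ‖z‖ < 1 := by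
    intro t ht
    nlinarith [ht.1, ht.2, norm_nonneg z]
  have hge : ∀ t ∈ Icc (0 : ℝ) 1, 0 ≤ t * ‖z‖ := fun t ht => mul_nonneg ht.1 (norm_nonneg z)
  have htm : ∀ t ∈ Icc (0 : ℝ) 1, (t : ℂ) * z ∈ unitDisk := by
    intro t ht
    have : ‖(t : ℂ) * z‖ < 1 := by rw [htn t ht]; exact hlt t ht
    simpa [unitDisk] using this
  have hdp : ∀ u : ℂ, ∀ t ∈ Icc (0 : ℝ) 1,
      HasDerivAt (fun t : ℝ => (u * p ((t : ℂ) * z)).re) (u * (p' ((t : ℂ) * z) * z)).re t := by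
    intro u t ht
    have h1 : HasDerivAt (fun s : ℂ => s * z) z (t : ℂ) := by
      simpa using (hasDerivAt_id (t : ℂ)).mul_const z
    have h2 := ((hp _ (htm t ht)).comp (t : ℂ) h1).const_mul u
    exact h2.real_of_complex
  have hdU : ∀ σ : ℝ, |σ| = 1 → ∀ t ∈ Icc (0 : ℝ) 1,
      HasDerivAt (fun t : ℝ => U (t * (σ * ‖z‖))) (U' (t * (σ * ‖z‖)) * (σ * ‖z‖)) t := by
    intro σ hσ t ht
    have h1 : HasDerivAt (fun s : ℝ => s * (σ * ‖z‖)) (σ * ‖z‖) t := by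
      simpa using (hasDerivAt_id t).mul_const (σ * ‖z‖)
    refine (hU _ ?_).comp t h1
    rw [abs_mul, abs_mul, hσ, one_mul, abs_norm, abs_of_nonneg ht.1]
    exact hlt t ht
  have hodeR : ∀ u : ℂ, ∀ t ∈ Icc (0 : ℝ) 1,
      γ * (u * p ((t : ℂ) * z)).re + t * (u * (p' ((t : ℂ) * z) * z)).re
        = γ * (u * ((1 + (A : ℂ) * w (t * z)) / (1 + (B : ℂ) * w (t * z)))).re := by
    intro u t ht
    rw [← re_ofReal_mul, ← re_ofReal_mul, ← re_ofReal_mul, ← add_re]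
    congr 1
    linear_combination u * hode _ (htm t ht)
  have hmob : ∀ t ∈ Icc (0 : ℝ) 1, _ := fun t ht =>
    aux_mob A B (t * ‖z‖) hB hBA hA (hge t ht) (hlt t ht) (w (t * z))
      ((hw _ (htm t ht)).trans (htn t ht).le)
  have habs : ∀ t ∈ Icc (0 : ℝ) 1, |t * (1 * ‖z‖)| < 1 ∧ |t * (-1 * ‖z‖)| < 1 := by
    intro t ht
    have e : t * (-1 * ‖z‖) = -(t * ‖z‖) := by ring
    rw [one_mul, e, abs_neg, abs_of_nonneg (hge t ht)]
    exact ⟨hlt t ht, hlt t ht⟩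
  constructor
  · have := aux_ode γ hγ (fun t => ((1 : ℂ) * p ((t : ℂ) * z)).re - U (t * (-1 * ‖z‖))) _
      (fun t ht => (hdp 1 t ht).sub (hdU (-1) (by simp) t ht)) (by
        intro t ht
        have h1 := hodeR 1 t ht
        have h2 := hUode _ (habs t ht).2
        have h3 := (hmob t ht).2
        have h4 : (1 + A * (t * (-1 * ‖z‖))) / (1 + B * (t * (-1 * ‖z‖)))
          = (1 - A * (t * ‖z‖)) / (1 - B * (t * ‖z‖)) := by congr 1 <;> ring
        rw [h4] at h2
        rw [one_mul (_ / _)] at h1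
        have h5 := mul_le_mul_of_nonneg_left h3 hγ.le
        linarith)
    simp only [ofReal_one, one_mul, neg_mul] at this
    exact (sub_nonneg.1 this).trans (re_le_norm _)
  · obtain ⟨u, hu1, hu2⟩ : ∃ u : ℂ, ‖u‖ ≤ 1 ∧ u * p z = ‖p z‖ := by
      refine ⟨(starRingEnd ℂ) (p z) / ‖p z‖, ?_, ?_⟩
      · rw [norm_div, Complex.norm_conj, Complex.norm_real, norm_norm]
        exact div_self_le_one _
      · by_cases h0 : p z = 0
        · simp [h0]
        · have : (‖p z‖ : ℂ) ≠ 0 := by simpa using h0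
          rw [div_mul_eq_mul_div, div_eq_iff this, mul_comm, Complex.mul_conj, normSq_eq_norm_sq]
          push_cast; ring
    have := aux_ode γ hγ (fun t => U (t * (1 * ‖z‖)) - (u * p ((t : ℂ) * z)).re) _
      (fun t ht => (hdU 1 (by simp) t ht).sub (hdp u t ht)) (by
        intro t ht
        have h1 := hodeR u t ht
        have h2 := hUode _ (habs t ht).1
        have h3 := (hmob t ht).1
        rw [one_mul] at h2
        have h4 : (u * ((1 + (A : ℂ) * w (t * z)) / (1 + (B : ℂ) * w (t * z)))).re
            ≤ (1 + A * (t * ‖z‖)) / (1 + B * (t * ‖z‖)) := by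
          refine (re_le_norm _).trans ?_
          rw [norm_mul]
          exact (mul_le_of_le_one_left (norm_nonneg _) hu1).trans h3
        have h5 := mul_le_mul_of_nonneg_left h4 hγ.le
        rw [one_mul]
        linarith)
    simp only [ofReal_one, one_mul, hu2, ofReal_re] at this
    exact sub_nonneg.1 this

/-- The comparison function for `B ≠ 0`. -/
lemma aux_U (γ A B : ℝ) (hγ : 0 < γ) (hB : -1 ≤ B) (hBA : B < A) (hA : A ≤ 1) (hB0 : B ≠ 0) :
    ∃ U' : ℝ → ℝ, ∀ x : ℝ, |x| < 1 →
      HasDerivAt (fun x : ℝ => A / B + (1 - A / B) *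
        (hyp2F1 1 (γ : ℂ) ((γ : ℂ) + 1) (-((B * x : ℝ) : ℂ))).re) (U' x) x ∧
      γ * (A / B + (1 - A / B) *
        (hyp2F1 1 (γ : ℂ) ((γ : ℂ) + 1) (-((B * x : ℝ) : ℂ))).re) + x * U' x
        = γ * ((1 + A * x) / (1 + B * x)) := by
  suffices h : ∀ x : ℝ, ∃ d : ℝ, |x| < 1 →
      HasDerivAt (fun x : ℝ => A / B + (1 - A / B) *
        (hyp2F1 1 (γ : ℂ) ((γ : ℂ) + 1) (-((B * x : ℝ) : ℂ))).re) d x ∧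
      γ * (A / B + (1 - A / B) *
        (hyp2F1 1 (γ : ℂ) ((γ : ℂ) + 1) (-((B * x : ℝ) : ℂ))).re) + x * d
        = γ * ((1 + A * x) / (1 + B * x)) by
    choose U' hU' using h
    exact ⟨U', hU'⟩
  intro x
  by_cases hx : |x| < 1
  swap
  · exact ⟨0, fun h => absurd h hx⟩
  have hBx : |B * x| < 1 := by
    rw [abs_mul]
    have : |B| ≤ 1 := abs_le.2 ⟨hB, by linarith⟩
    nlinarith [abs_nonneg B, abs_nonneg x]
  have hmem : -((B * x : ℝ) : ℂ) ∈ unitDisk := by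
    have : ‖-((B * x : ℝ) : ℂ)‖ < 1 := by rw [norm_neg, Complex.norm_real]; exact hBx
    simpa only [unitDisk, mem_ball_zero_iff] using this
  obtain ⟨D, hD, hode⟩ := aux_hyp γ hγ _ hmem
  refine ⟨(1 - A / B) * (D * -(B : ℂ)).re, fun _ => ⟨?_, ?_⟩⟩
  · have h1 : HasDerivAt (fun s : ℂ => -((B : ℂ) * s)) (-(B : ℂ)) (x : ℂ) := by
      simpa [neg_mul] using (hasDerivAt_id (x : ℂ)).const_mul (-(B : ℂ))
    have h2 : HasDerivAt (fun s : ℂ => hyp2F1 1 (γ : ℂ) ((γ : ℂ) + 1) (-((B : ℂ) * s)))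
        (D * -(B : ℂ)) (x : ℂ) := by
      push_cast at hD
      exact HasDerivAt.comp (h₂ := hyp2F1 1 (γ : ℂ) ((γ : ℂ) + 1)) (x : ℂ) hD h1
    have h3 := (h2.real_of_complex.const_mul (1 - A / B)).const_add (A / B)
    push_cast
    exact h3
  · have h1 := congrArg Complex.re hode
    have e : (γ : ℂ) * (1 / (1 - -((B * x : ℝ) : ℂ))) = ((γ * (1 / (1 + B * x)) : ℝ) : ℂ) := by
      push_cast; ring
    rw [e, ofReal_re, add_re, re_ofReal_mul, ← ofReal_neg, re_ofReal_mul] at h1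
    rw [ofReal_neg] at h1
    have e2 : (D * -(B : ℂ)).re = -B * D.re := by
      rw [mul_comm, ← ofReal_neg, re_ofReal_mul]
    rw [e2]
    have hpos : 1 + B * x ≠ 0 := by linarith [(abs_lt.1 hBx).1]
    have h2 : γ * ((1 + A * x) / (1 + B * x))
        = γ * (A / B) + (1 - A / B) * (γ * (1 / (1 + B * x))) := by
      have h3 : (1 + A * x) / (1 + B * x) = A / B + (1 - A / B) * (1 / (1 + B * x)) := by
        rw [div_eq_iff hpos, add_mul, mul_assoc, one_div_mul_cancel hpos]
        field_simp
        ring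
      rw [h3]; ring
    rw [h2, ← h1]
    ring

/-- if `f ∈ N_{k,c}^α(λ, μ, (1+Az)/(1+Bz))` with `k, λ` real and
`μk/λ > 0`, then for `|z| = r < 1`,
`L(r) ≤ |(1/cos α){e^{iα}(z/S_{k+1}^c f(z))^μ - i sin α}| ≤ U(r)`. -/
theorem modulus_bounds (μ α A B k lam : ℝ) (c : ℂ) (a : ℕ → ℂ)
    (hμ0 : 0 < μ) (hμ1 : μ < 1) (hα : |α| < Real.pi / 2)
    (hB : -1 ≤ B) (hBA : B < A) (hA : A ≤ 1)
    (hknp : NotNonposInt (k : ℂ)) (hlam : lam ≠ 0) (hpos : 0 < μ * k / lam)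
    (ha : InA a)
    (hnv : Nonvan (struveOp (k : ℂ) c a)) (hnv1 : Nonvan (struveOp ((k : ℂ) + 1) c a))
    (hmem : memN α (lam : ℂ) μ (k : ℂ) c
      (fun z => (1 + (A : ℂ) * z) / (1 + (B : ℂ) * z)) a) :
    ∀ z ∈ unitDisk,
      lowerBdR A B μ k lam ‖z‖
          ≤ ‖(exp (α * I) * ratioPow μ (struveOp ((k : ℂ) + 1) c a) z
              - (Real.sin α : ℂ) * I) / (Real.cos α : ℂ)‖ ∧
        ‖(exp (α * I) * ratioPow μ (struveOp ((k : ℂ) + 1) c a) z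
              - (Real.sin α : ℂ) * I) / (Real.cos α : ℂ)‖
          ≤ upperBdR A B μ k lam ‖z‖ := by
  have hk0 : (k : ℂ) ≠ 0 := by simpa using hknp 0
  have hk1np : NotNonposInt ((k : ℂ) + 1) := by
    intro n hn
    apply hknp (n + 1)
    push_cast
    linear_combination hn
  have hUo : IsOpen unitDisk := Metric.isOpen_ball
  have h0U : (0 : ℂ) ∈ unitDisk := by simp [unitDisk]
  have hlc : (lam : ℂ) ≠ 0 := by exact_mod_cast hlam
  have hcos : 0 < Real.cos α := Real.cos_pos_of_mem_Ioo (abs_lt.1 hα)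
  have hcosc : (Real.cos α : ℂ) ≠ 0 := by exact_mod_cast hcos.ne'
  have hs0 := aux_coef_sum (k : ℂ) c a ha
  have hs1 := aux_coef_sum ((k : ℂ) + 1) c a ha
  have hst0 := aux_struve (k : ℂ) c a ha
  have hst1 := aux_struve ((k : ℂ) + 1) c a ha
  have hval : ∀ κ : ℂ, (∑' n, coefE κ c a n * (0 : ℂ) ^ n) = 1 := by
    intro κ
    rw [tsum_eq_single 0 (by intro n hn; simp [hn])]
    simp [coefE, poch, ha.2.1]
  set G0 : ℂ → ℂ := fun z => ∑' n, coefE (k : ℂ) c a n * z ^ n with hG0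
  set G1 : ℂ → ℂ := fun z => ∑' n, coefE ((k : ℂ) + 1) c a n * z ^ n with hG1
  have hG00 : G0 0 = 1 := hval _
  have hG10 : G1 0 = 1 := hval _
  have hst1' : ∀ z ∈ unitDisk, struveOp ((k : ℂ) + 1) c a z = z * G1 z := hst1
  have hst0' : ∀ z ∈ unitDisk, struveOp (k : ℂ) c a z = z * G0 z := hst0
  have hG1ne : ∀ z ∈ unitDisk, G1 z ≠ 0 := by
    intro z hz h
    by_cases h0 : z = 0
    · rw [h0, hG10] at h; exact one_ne_zero h
    · apply hnv1 z hz h0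
      rw [hst1' z hz, h, mul_zero]
  have hder0 : ∀ z ∈ unitDisk, DifferentiableAt ℂ G0 z := by
    intro z hz
    obtain ⟨D, hD, _⟩ := aux_powser _ hs0 z hz
    exact hD.differentiableAt
  have hder1 : ∀ z ∈ unitDisk, ∃ D, HasDerivAt G1 D z ∧ z * D = k * (G0 z - G1 z) := by
    intro z hz
    obtain ⟨D, hD, hS⟩ := aux_powser _ hs1 z hz
    refine ⟨D, hD, ?_⟩
    have h2 := (((hs0 z hz).hasSum.sub (hs1 z hz).hasSum).mul_left (k : ℂ))
    refine hS.unique (h2.congr_fun ?_)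
    intro n
    have hp := aux_poch (k : ℂ) n
    have n1 := aux_poch_ne _ hknp n
    have n2 := aux_poch_ne _ hk1np n
    have key : (n : ℂ) / poch ((k : ℂ) + 1) n
        = k * (1 / poch (k : ℂ) n - 1 / poch ((k : ℂ) + 1) n) := by
      field_simp
      linear_combination hp
    simp only [coefE]
    have e1 : ∀ x y : ℂ, (-c / 4) ^ n / (x * y) = (-c / 4) ^ n / x * (1 / y) := by
      intro x y; rw [div_mul_div_comm, mul_one]
    rw [e1, e1]
    linear_combination (-c / 4) ^ n / poch (3 / 2) n * a (n + 1) * z ^ n * key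
  have hd1 : ∀ z ∈ unitDisk, DifferentiableAt ℂ G1 z := by
    intro z hz
    obtain ⟨D, hD, _⟩ := hder1 z hz
    exact hD.differentiableAt
  have hRP : ∀ z ∈ unitDisk,
      ratioPow μ (struveOp ((k : ℂ) + 1) c a) z = (G1 z)⁻¹ ^ (μ : ℂ) := by
    intro z hz
    unfold ratioPow
    congr 1
    split_ifs with h0
    · rw [h0, hG10, inv_one]
    · rw [hst1' z hz]; field_simp
  have hRQ : ∀ z ∈ unitDisk,
      ratioQ (struveOp (k : ℂ) c a) (struveOp ((k : ℂ) + 1) c a) z = G0 z / G1 z := by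
    intro z hz
    unfold ratioQ
    split_ifs with h0
    · rw [h0, hG10, hG00, div_one]
    · rw [hst1' z hz, hst0' z hz, mul_div_mul_left _ _ h0]
  obtain ⟨w, hwa, hw0, hw1, hJ⟩ := hmem
  have hJ' : ∀ z ∈ unitDisk, exp (α * I) * ((G1 z)⁻¹ ^ (μ : ℂ) *
      ((1 + lam) - lam * (G0 z / G1 z)))
      = Real.cos α * ((1 + (A : ℂ) * w z) / (1 + (B : ℂ) * w z)) + Real.sin α * I := by
    intro z hz
    have := hJ z hz
    unfold Jfun at this
    rw [hRP z hz, hRQ z hz] at this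
    refine Eq.trans ?_ this
    ring
  have hwn : ∀ z ∈ unitDisk, ‖w z‖ ≤ ‖z‖ := by
    intro z hz
    apply Complex.norm_le_norm_of_mapsTo_ball (R := 1) hwa.differentiableOn _ hw0
    · simpa [unitDisk] using hz
    · intro x hx
      have := hw1 x hx
      simpa using this.le
  have hslit : ∀ z ∈ unitDisk, (G1 z)⁻¹ ∈ slitPlane := by
    apply aux_branch μ hμ0 hμ1 (fun z => (G1 z)⁻¹)
      (fun z => (1 + lam) - lam * (G0 z / G1 z))
    · apply DifferentiableOn.analyticOnNhd _ hUo
      intro z hz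
      exact ((hd1 z hz).inv (hG1ne z hz)).differentiableWithinAt
    · apply DifferentiableOn.analyticOnNhd _ hUo
      intro z hz
      exact ((((hder0 z hz).div (hd1 z hz) (hG1ne z hz)).const_mul (lam : ℂ)).const_sub
        (1 + (lam : ℂ))).differentiableWithinAt
    · simp [hG10]
    · intro z hz
      exact inv_ne_zero (hG1ne z hz)
    · simp [hG10, hG00]
    · have hcw : ContinuousOn w unitDisk := hwa.continuousOn
      have hc2 : ContinuousOn (fun z => (exp (α * I))⁻¹ *
          (Real.cos α * ((1 + (A : ℂ) * w z) / (1 + (B : ℂ) * w z)) + Real.sin α * I))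
          unitDisk := by
        refine continuousOn_const.mul ((continuousOn_const.mul (ContinuousOn.div
          (continuousOn_const.add (continuousOn_const.mul hcw))
          (continuousOn_const.add (continuousOn_const.mul hcw)) ?_)).add continuousOn_const)
        intro z hz
        exact aux_ne B hB (by linarith) _ (hw1 z hz)
      refine hc2.congr ?_
      intro z hz
      dsimp only
      rw [← hJ' z hz, inv_mul_cancel_left₀ (exp_ne_zero _)]
  set γ : ℝ := μ * k / lam with hγ
  set p : ℂ → ℂ := fun z =>
    (exp (α * I) * (G1 z)⁻¹ ^ (μ : ℂ) - (Real.sin α : ℂ) * I) / (Real.cos α : ℂ) with hp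
  have hpd : ∀ z, ∃ d, z ∈ unitDisk → HasDerivAt p d z ∧
      γ * p z + z * d = γ * ((1 + (A : ℂ) * w z) / (1 + (B : ℂ) * w z)) := by
    intro z
    by_cases hz : z ∈ unitDisk
    swap
    · exact ⟨0, fun h => absurd h hz⟩
    obtain ⟨D, hD, hzD⟩ := hder1 z hz
    have hne := hG1ne z hz
    have h1 := (hD.inv hne).cpow_const (c := (μ : ℂ)) (hslit z hz)
    have h2 := ((h1.const_mul (exp (α * I))).sub_const ((Real.sin α : ℂ) * I)).div_const
      (Real.cos α : ℂ)
    refine ⟨_, fun _ => ⟨h2, ?_⟩⟩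
    have hcp : (G1⁻¹ z) ^ ((μ : ℂ) - 1) = (G1 z)⁻¹ ^ (μ : ℂ) * G1 z := by
      rw [Pi.inv_apply, cpow_sub _ _ (inv_ne_zero hne), cpow_one, div_inv_eq_mul]
    rw [hcp]
    have hJz := hJ' z hz
    have hγc : (γ : ℂ) = μ * k / lam := by rw [hγ]; push_cast; ring
    have hφ : (1 + (A : ℂ) * w z) / (1 + (B : ℂ) * w z)
        = (exp (α * I) * ((G1 z)⁻¹ ^ (μ : ℂ) * ((1 + lam) - lam * (G0 z / G1 z)))
          - Real.sin α * I) / Real.cos α := by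
      rw [hJz]; field_simp; ring
    rw [hφ, hp, hγc]
    dsimp only
    generalize (G1 z)⁻¹ ^ (μ : ℂ) = P
    generalize exp (α * I) = E
    field_simp
    linear_combination (-(lam : ℂ) * E * P * μ) * hzD
  choose p' hp' using hpd
  intro z hz
  have hz1 : ‖z‖ < 1 := by simpa [unitDisk] using hz
  rw [hRP z hz]
  change lowerBdR A B μ k lam ‖z‖ ≤ ‖p z‖ ∧ ‖p z‖ ≤ upperBdR A B μ k lam ‖z‖
  have fin := aux_final γ A B hpos hB hBA hA p p' w (fun z hz => (hp' z hz).1) hwn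
    (fun z hz => (hp' z hz).2)
  by_cases hB0 : B = 0
  · have hg1 : γ + 1 ≠ 0 := by positivity
    have hU := fin (fun x => 1 + γ / (γ + 1) * A * x) (fun _ => γ / (γ + 1) * A)
      (fun x _ => by
        simpa using ((hasDerivAt_id x).const_mul (γ / (γ + 1) * A)).const_add 1)
      (fun x _ => by
        rw [hB0]
        field_simp
        ring) z hz
    have hfr : μ * k / (μ * k + lam) = γ / (γ + 1) := by
      have hmk : μ * k = γ * lam := by rw [hγ]; field_simp
      rw [hmk, show γ * lam + lam = (γ + 1) * lam by ring, mul_div_mul_right _ _ hlam]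
    unfold lowerBdR upperBdR
    rw [if_pos hB0, if_pos hB0, hfr]
    have hA0 : 0 ≤ γ / (γ + 1) * A := mul_nonneg (by positivity) (by linarith)
    constructor
    · refine le_trans ?_ hU.1
      nlinarith
    · refine hU.2.trans ?_
      nlinarith
  · obtain ⟨U', hU'⟩ := aux_U γ A B hpos hB hBA hA hB0
    have hU := fin _ U' (fun x hx => (hU' x hx).1) (fun x hx => (hU' x hx).2) z hz
    unfold lowerBdR upperBdR
    rw [if_neg hB0, if_neg hB0]
    refine ⟨?_, hU.2⟩
    have := hU.1
    rw [mul_neg, ofReal_neg, neg_neg] at this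
    exact this
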